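/- Fix a wavenumber k > 0. There exist ε₀ > 0 and C > 0 such that for every real a with |a| < ε₀ there exist a wave speed c ∈ ℝ and a C^∞, even, 2π-periodic function w : ℝ → ℝ satisfying the CDG–SK profile equation k⁴ w⁗(z) − c w(z) + 15 k² w(z) w''(z) + 15 w(z)³ = 0 for all z ∈ ℝ, such that sup_{z∈ℝ} | w(z) − ( a·cos z + a²·( −15/(2k²) + cos(2z)/(2k²) ) + a³·(3/(16k⁴))·cos(3z) ) | ≤ C·a⁴ and | c − (k⁴ + 105 a²) | ≤ C·a⁴. -/

import Mathlib

/-!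
The scaling `w = k² v`, `c = k⁴ s`, `a = k² b` reduces the problem to `k = 1`, that is, to
`v'''' - s v + 15 v v'' + 15 v³ = 0`. Write `v = b φ` and `s = 1 + b σ`, with `φ = cos + b u` and
`u` without `cos` component. The equation becomes `u'''' - u = σ φ - g`, where
`g = 15 φ φ'' + 15 b φ³`.

On even `2π`-periodic functions the operator `D⁴ - 1` has kernel spanned by `cos`, and on the kernel
of the first cosine coefficient `P` it has a bounded inverse `K` for which `K₂ = D² K` is also
bounded (`exists_ops`). Both come from the factorization `D⁴ - 1 = (D² - 1) (D² + 1)` and variation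
of constants for the two second-order factors (`exists_solOp`); they are diagonal on the harmonics.
Setting `u = K f`, solvability forces `σ = P g`, and the equation turns into the fixed-point problem
`f = P(g) φ - g` in the Banach algebra of continuous even `2π`-periodic functions.

At `b = 0` the right-hand side does not depend on `f`, so the implicit function theorem gives a
continuous branch `b ↦ f b` (`exists_branch`). The explicit function `approx b` satisfies the
fixed-point equation up to `O(b²)`, and the fixed-point map is Lipschitz in `f` with constant
`O(b)`, so `f b - approx b = O(b²)`; as the `b²` term of `g` along `approx` has only even harmonics,
also `σ = 105 b + O(b³)` (`branch_estimate`). Applying `K` and multiplying by `b²` gives the error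
`O(b⁴)` for the profile. Smoothness follows by bootstrapping in the equation (`contDiff_of_chain`).
-/

namespace CDGSK

open Set Filter Topology Asymptotics

/-! ### Even periodic functions as a Banach algebra -/

/-- Continuous functions on `[-1, 1]`; `F` encodes the even `2π`-periodic function
`z ↦ F (cos z)`, and every continuous even `2π`-periodic function arises in this way. -/
abbrev X := C(Set.Icc (-1 : ℝ) 1, ℝ)

/-- The even `2π`-periodic function `z ↦ F (cos z)` encoded by `F`. -/
noncomputable def ev (F : X) (z : ℝ) : ℝ := F ⟨Real.cos z, Real.cos_mem_Icc z⟩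

/-- The coordinate function, which encodes `cos`. -/
noncomputable def cosX : X := ⟨fun x => (x : ℝ), continuous_subtype_val⟩

@[simp] lemma ev_cosX (z : ℝ) : ev cosX z = Real.cos z := rfl
@[simp] lemma ev_add (F G : X) (z : ℝ) : ev (F + G) z = ev F z + ev G z := rfl
@[simp] lemma ev_sub (F G : X) (z : ℝ) : ev (F - G) z = ev F z - ev G z := rfl
@[simp] lemma ev_neg (F : X) (z : ℝ) : ev (-F) z = -ev F z := rfl
@[simp] lemma ev_mul (F G : X) (z : ℝ) : ev (F * G) z = ev F z * ev G z := rfl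
@[simp] lemma ev_smul (r : ℝ) (F : X) (z : ℝ) : ev (r • F) z = r * ev F z := rfl
@[simp] lemma ev_zero (z : ℝ) : ev 0 z = 0 := rfl
@[simp] lemma ev_one (z : ℝ) : ev 1 z = 1 := rfl
@[simp] lemma ev_pow (F : X) (n : ℕ) (z : ℝ) : ev (F ^ n) z = ev F z ^ n := by
  simp [ev]

lemma ev_even (F : X) (z : ℝ) : ev F (-z) = ev F z := by simp [ev]
lemma ev_periodic (F : X) : Function.Periodic (ev F) (2 * Real.pi) := fun z => by simp [ev]
lemma ev_reflect (F : X) (z : ℝ) : ev F (2 * Real.pi - z) = ev F z := by simp [ev]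

lemma abs_ev_le (F : X) (z : ℝ) : |ev F z| ≤ ‖F‖ := F.norm_coe_le_norm _

@[fun_prop] lemma continuous_ev (F : X) : Continuous (ev F) :=
  F.continuous.comp (Real.continuous_cos.subtype_mk _)

lemma ev_ext {F G : X} (h : ∀ z, ev F z = ev G z) : F = G := by
  ext x
  have := h (Real.arccos x)
  simpa [ev, Real.cos_arccos x.2.1 x.2.2] using this

/-- The element of `X` agreeing on `[0, π]` with a given continuous function. -/
noncomputable def toX (u : ℝ → ℝ) (hu : Continuous u) : X :=
  ⟨fun x => u (Real.arccos x), by fun_prop⟩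

/-- A function symmetric about `0` and about `π` is encoded by its restriction to `[0, π]`. -/
lemma ev_toX {u : ℝ → ℝ} (hu : Continuous u) (h0 : ∀ z, u (-z) = u z)
    (hpi : ∀ z, u (2 * Real.pi - z) = u z) (z : ℝ) : ev (toX u hu) z = u z := by
  have hper : Function.Periodic u (2 * Real.pi) := fun z => by
    rw [← hpi, ← h0 z]; congr 1; ring
  have hper2 : Function.Periodic (fun z => (u z, Real.cos z)) (2 * Real.pi) := fun z => by
    simp [hper z]
  obtain ⟨y, hy, hzy⟩ := hper2.exists_mem_Ico₀ Real.two_pi_pos z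
  obtain ⟨hu1, hc⟩ := Prod.ext_iff.1 hzy
  simp only at hu1 hc
  change u (Real.arccos (Real.cos z)) = u z
  rw [hu1, hc]
  rcases le_total y Real.pi with h | h
  · rw [Real.arccos_cos hy.1 h]
  · rw [← hpi y, ← Real.cos_two_pi_sub, Real.arccos_cos (by linarith [hy.2]) (by linarith)]

/-! ### Second-order problems for even periodic functions -/

/-- The differential equation `u'' = l u + f` for the functions encoded by `U` and `F`. -/
def IsSol (l : ℝ) (U F : X) : Prop :=
  ∃ u₁ : ℝ → ℝ, (∀ z, HasDerivAt (ev U) (u₁ z) z) ∧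
    ∀ z, HasDerivAt u₁ (l * ev U z + ev F z) z

/-- Uniqueness for the Cauchy problem of the linear equation `w'' = l w`. -/
lemma ode_zero {l m : ℝ} {w w₁ : ℝ → ℝ} (h0 : ∀ z, HasDerivAt w (w₁ z) z)
    (h1 : ∀ z, HasDerivAt w₁ (l * w z) z) (hm : w m = 0) (hm1 : w₁ m = 0) (z : ℝ) :
    w z = 0 := by
  let A : ℝ × ℝ →L[ℝ] ℝ × ℝ :=
    (ContinuousLinearMap.snd ℝ ℝ ℝ).prod (l • ContinuousLinearMap.fst ℝ ℝ ℝ)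
  have := ODE_solution_unique_univ (v := fun _ => A) (s := fun _ => univ) (t₀ := m)
    (f := fun z => (w z, w₁ z)) (g := fun _ => 0) (K := ‖A‖₊)
    (fun _ => A.lipschitz.lipschitzOnWith)
    (fun t => ⟨by simpa [A] using (h0 t).prodMk (h1 t), trivial⟩)
    (fun t => ⟨by simpa using hasDerivAt_const t (0 : ℝ × ℝ), trivial⟩) (by simp [hm, hm1])
  exact congrArg Prod.fst (congrFun this z)

/-- A solution of `u'' = l u + f` with `u' = 0` at a symmetry point of `f` is symmetric about
that point. -/
lemma ode_reflect {l m : ℝ} {u u₁ f : ℝ → ℝ} (h0 : ∀ z, HasDerivAt u (u₁ z) z)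
    (h1 : ∀ z, HasDerivAt u₁ (l * u z + f z) z) (hf : ∀ z, f (2 * m - z) = f z)
    (hm : u₁ m = 0) (z : ℝ) : u (2 * m - z) = u z := by
  have hr : ∀ z : ℝ, HasDerivAt (fun z => 2 * m - z) (-1) z := fun z => by
    simpa using (hasDerivAt_id z).const_sub (2 * m)
  have := ode_zero (l := l) (m := m) (w := fun z => u (2 * m - z) - u z)
    (w₁ := fun z => -u₁ (2 * m - z) - u₁ z)
    (fun z => (((h0 _).comp z (hr z)).sub (h0 z)).congr_deriv (by ring))
    (fun z => (((h1 _).comp z (hr z)).neg.sub (h1 z)).congr_deriv (by rw [hf]; ring))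
    (by ring_nf) (by rw [show 2 * m - m = m by ring, hm]; ring) z
  linarith

/-- Even periodic functions satisfy the Neumann conditions at `0` and `π`. -/
lemma neumann {U : X} {u₁ : ℝ → ℝ} (h : ∀ z, HasDerivAt (ev U) (u₁ z) z) :
    u₁ 0 = 0 ∧ u₁ Real.pi = 0 := by
  have key : ∀ m : ℝ, (∀ z, ev U (2 * m - z) = ev U z) → u₁ m = 0 := fun m hm => by
    have hr : HasDerivAt (fun z => 2 * m - z) (-1) m := by
      simpa using (hasDerivAt_id m).const_sub (2 * m)
    have h2 : HasDerivAt (fun z => ev U (2 * m - z)) (u₁ (2 * m - m) * -1) m :=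
      (h (2 * m - m)).comp m hr
    simp_rw [hm] at h2
    have := h2.unique (h m)
    rw [show 2 * m - m = m by ring] at this
    linarith
  exact ⟨key 0 (by simpa using ev_even U), key _ (ev_reflect U)⟩

/-- Integration over `[0, π]` against a continuous weight, as a functional on `X`. -/
lemma exists_integral_clm (g : ℝ → ℝ) (hg : Continuous g) :
    ∃ I : X →L[ℝ] ℝ, ∀ F, I F = ∫ t in (0 : ℝ)..Real.pi, g t * ev F t := by
  obtain ⟨M, hM⟩ := (isCompact_Icc (a := (0 : ℝ)) (b := Real.pi)).exists_bound_of_continuousOn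
    hg.continuousOn
  refine ⟨LinearMap.mkContinuous
    { toFun := fun F => ∫ t in (0 : ℝ)..Real.pi, g t * ev F t
      map_add' := fun F G => ?_
      map_smul' := fun r F => ?_ } (M * Real.pi) fun F => ?_, fun F => rfl⟩
  · rw [← intervalIntegral.integral_add (Continuous.intervalIntegrable (by fun_prop) _ _)
      (Continuous.intervalIntegrable (by fun_prop) _ _)]
    simp [mul_add]
  · rw [RingHom.id_apply, smul_eq_mul, ← intervalIntegral.integral_const_mul]
    congr 1; ext t; simp; ring
  · have := intervalIntegral.norm_integral_le_of_norm_le_const (a := 0) (b := Real.pi)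
      (C := M * ‖F‖) (f := fun t => g t * ev F t) fun t ht => by
        rw [uIoc_of_le Real.pi_pos.le] at ht
        rw [norm_mul]
        have h1 := hM t ⟨ht.1.le, ht.2⟩
        exact mul_le_mul h1 (abs_ev_le F t) (norm_nonneg _) ((norm_nonneg _).trans h1)
    rw [sub_zero, abs_of_pos Real.pi_pos] at this
    calc _ ≤ _ := this
      _ = _ := by ring

/-- The variation-of-constants formula for `u'' = l u + f`, where `Ch`, `Sh` is the fundamental
system of the homogeneous equation; `r` is the initial value `u 0`. -/
noncomputable def vc (Ch Sh : ℝ → ℝ) (r : ℝ) (F : X) (z : ℝ) : ℝ :=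
  Sh z * (∫ t in (0 : ℝ)..z, Ch t * ev F t) - Ch z * (∫ t in (0 : ℝ)..z, Sh t * ev F t) + r * Ch z

lemma hasDerivAt_prim {g : ℝ → ℝ} (hg : Continuous g) (z : ℝ) :
    HasDerivAt (fun z => ∫ t in (0 : ℝ)..z, g t) (g z) z :=
  intervalIntegral.integral_hasDerivAt_right (hg.intervalIntegrable _ _)
    (hg.stronglyMeasurableAtFilter _ _) hg.continuousAt

/-- Solution operator of the Neumann problem for `u'' = l u + f`: the formula `vc` defines a
bounded operator `T` on `X`, and `T F` solves the equation whenever `vc` satisfies the Neumann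
condition at `π` (its derivative at `0` vanishes automatically). The initial value `r` is allowed to
depend linearly on `F`, so that it can be chosen to achieve this condition. -/
lemma exists_solOp {l : ℝ} {Ch Sh : ℝ → ℝ} (hCh : ∀ z, HasDerivAt Ch (l * Sh z) z)
    (hSh : ∀ z, HasDerivAt Sh (Ch z) z) (hid : ∀ z, Ch z ^ 2 - l * Sh z ^ 2 = 1)
    (hS0 : Sh 0 = 0) (r : X →L[ℝ] ℝ) :
    ∃ T : X →L[ℝ] X, ∀ F,
      Ch Real.pi * (∫ t in (0 : ℝ)..Real.pi, Ch t * ev F t)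
        - l * Sh Real.pi * (∫ t in (0 : ℝ)..Real.pi, Sh t * ev F t) + r F * (l * Sh Real.pi) = 0 →
      IsSol l (T F) F := by
  have cCh : Continuous Ch := continuous_iff_continuousAt.2 fun z => (hCh z).continuousAt
  have cSh : Continuous Sh := continuous_iff_continuousAt.2 fun z => (hSh z).continuousAt
  have d0 : ∀ F z, HasDerivAt (vc Ch Sh (r F) F) (Ch z * (∫ t in (0 : ℝ)..z, Ch t * ev F t)
      - l * Sh z * (∫ t in (0 : ℝ)..z, Sh t * ev F t) + r F * (l * Sh z)) z := fun F z =>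
    ((((hSh z).mul (hasDerivAt_prim (g := fun t => Ch t * ev F t) (by fun_prop) z)).sub
      ((hCh z).mul (hasDerivAt_prim (g := fun t => Sh t * ev F t) (by fun_prop) z))).add
      ((hCh z).const_mul (r F))).congr_deriv (by ring)
  have d1 : ∀ F z, HasDerivAt (fun z => Ch z * (∫ t in (0 : ℝ)..z, Ch t * ev F t)
      - l * Sh z * (∫ t in (0 : ℝ)..z, Sh t * ev F t) + r F * (l * Sh z))
      (l * vc Ch Sh (r F) F z + ev F z) z := fun F z =>
    ((((hCh z).mul (hasDerivAt_prim (g := fun t => Ch t * ev F t) (by fun_prop) z)).sub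
      (((hSh z).const_mul l).mul
        (hasDerivAt_prim (g := fun t => Sh t * ev F t) (by fun_prop) z))).add
      (((hSh z).const_mul l).const_mul (r F))).congr_deriv (by
        unfold vc; linear_combination (ev F z) * hid z)
  have cvc : ∀ F, Continuous (vc Ch Sh (r F) F) := fun F =>
    continuous_iff_continuousAt.2 fun z => (d0 F z).continuousAt
  obtain ⟨M, hM⟩ := (isCompact_Icc (a := (0 : ℝ)) (b := Real.pi)).exists_bound_of_continuousOn
    cCh.continuousOn
  obtain ⟨M', hM'⟩ := (isCompact_Icc (a := (0 : ℝ)) (b := Real.pi)).exists_bound_of_continuousOn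
    cSh.continuousOn
  have hM0 : 0 ≤ M := (norm_nonneg _).trans (hM 0 ⟨le_rfl, Real.pi_pos.le⟩)
  have hM0' : 0 ≤ M' := (norm_nonneg _).trans (hM' 0 ⟨le_rfl, Real.pi_pos.le⟩)
  have bd : ∀ (g : ℝ → ℝ) (B : ℝ), 0 ≤ B → (∀ t ∈ Icc 0 Real.pi, ‖g t‖ ≤ B) → ∀ (F : X),
      ∀ z ∈ Icc 0 Real.pi, |∫ t in (0 : ℝ)..z, g t * ev F t| ≤ B * Real.pi * ‖F‖ := by
    intro g B hB hg F z hz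
    have := intervalIntegral.norm_integral_le_of_norm_le_const (a := 0) (b := z)
      (C := B * ‖F‖) (f := fun t => g t * ev F t) fun t ht => by
        rw [uIoc_of_le hz.1] at ht
        rw [norm_mul]
        exact mul_le_mul (hg t ⟨ht.1.le, ht.2.trans hz.2⟩) (abs_ev_le F t) (norm_nonneg _) hB
    rw [sub_zero, abs_of_nonneg hz.1, Real.norm_eq_abs] at this
    refine this.trans ?_
    have := mul_le_mul_of_nonneg_left hz.2 (mul_nonneg hB (norm_nonneg F))
    linarith
  refine ⟨LinearMap.mkContinuous
    { toFun := fun F => toX (vc Ch Sh (r F) F) (cvc F)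
      map_add' := fun F G => ?_
      map_smul' := fun c F => ?_ } (M' * (M * Real.pi) + M * (M' * Real.pi) + ‖r‖ * M)
      fun F => ?_, fun F hF => ?_⟩
  · ext x
    change vc Ch Sh _ _ _ = vc Ch Sh _ _ _ + vc Ch Sh _ _ _
    simp only [vc, ev_add, mul_add, map_add]
    rw [intervalIntegral.integral_add (Continuous.intervalIntegrable (by fun_prop) _ _)
      (Continuous.intervalIntegrable (by fun_prop) _ _),
      intervalIntegral.integral_add (Continuous.intervalIntegrable (by fun_prop) _ _)
      (Continuous.intervalIntegrable (by fun_prop) _ _)]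
    ring
  · ext x
    change vc Ch Sh _ _ _ = c * vc Ch Sh _ _ _
    simp only [vc, ev_smul, map_smul, mul_left_comm _ c, intervalIntegral.integral_const_mul,
      smul_eq_mul]
    ring
  · rw [LinearMap.coe_mk, AddHom.coe_mk, ContinuousMap.norm_le _ (by positivity)]
    intro x
    have hx : Real.arccos x ∈ Icc 0 Real.pi := ⟨Real.arccos_nonneg _, Real.arccos_le_pi _⟩
    change |vc Ch Sh (r F) F (Real.arccos x)| ≤ _
    generalize Real.arccos (x : ℝ) = z at hx
    have e1 : |Sh z * ∫ t in (0 : ℝ)..z, Ch t * ev F t| ≤ M' * (M * Real.pi * ‖F‖) := by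
      rw [abs_mul]
      exact mul_le_mul (hM' z hx) (bd Ch M hM0 hM F z hx) (abs_nonneg _) hM0'
    have e2 : |Ch z * ∫ t in (0 : ℝ)..z, Sh t * ev F t| ≤ M * (M' * Real.pi * ‖F‖) := by
      rw [abs_mul]
      exact mul_le_mul (hM z hx) (bd Sh M' hM0' hM' F z hx) (abs_nonneg _) hM0
    have e3 : |r F * Ch z| ≤ ‖r‖ * ‖F‖ * M := by
      rw [abs_mul]
      exact mul_le_mul (r.le_opNorm F) (hM z hx) (abs_nonneg _) (by positivity)
    unfold vc
    calc _ ≤ _ := (abs_add_le _ _).trans (add_le_add (abs_sub _ _) le_rfl)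
      _ ≤ _ := add_le_add (add_le_add e1 e2) e3
      _ = _ := by ring
  · have hT : ev (toX (vc Ch Sh (r F) F) (cvc F)) = vc Ch Sh (r F) F := by
      funext z
      refine ev_toX _ (fun z => ?_) (ode_reflect (d0 F) (d1 F) (ev_reflect F) hF) z
      simpa using ode_reflect (m := 0) (d0 F) (d1 F) (by simpa using ev_even F) (by simp [hS0]) z
    have : IsSol l (toX (vc Ch Sh (r F) F) (cvc F)) F :=
      ⟨_, by rw [hT]; exact d0 F, by rw [hT]; exact d1 F⟩
    exact this

/-! ### The harmonics and the inverse of the fourth-order operator -/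

lemma IsSol.add_smul {l r : ℝ} {U V F G : X} (h : IsSol l U F) (h' : IsSol l V G) :
    IsSol l (U + r • V) (F + r • G) := by
  obtain ⟨u, hu, hu'⟩ := h
  obtain ⟨v, hv, hv'⟩ := h'
  exact ⟨fun z => u z + r * v z, fun z => (hu z).add ((hv z).const_mul r),
    fun z => ((hu' z).add ((hv' z).const_mul r)).congr_deriv (by simp; ring)⟩

/-- The element of `X` encoding the harmonic `cos (n z)`. -/
noncomputable def H (n : ℕ) : X := toX (fun z => Real.cos (n * z)) (by fun_prop)

@[simp] lemma ev_H (n : ℕ) (z : ℝ) : ev (H n) z = Real.cos (n * z) :=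
  ev_toX _ (by simp) (fun z => by
    rw [show (n : ℝ) * (2 * Real.pi - z) = n * (2 * Real.pi) - n * z by ring,
      Real.cos_nat_mul_two_pi_sub]) z

lemma isSol_H (l : ℝ) (n : ℕ) : IsSol l (H n) ((-(n : ℝ) ^ 2 - l) • H n) := by
  have hn : ∀ z : ℝ, HasDerivAt (fun z : ℝ => (n : ℝ) * z) n z := fun z => by
    simpa using (hasDerivAt_id z).const_mul (n : ℝ)
  refine ⟨fun z => -Real.sin (n * z) * n, fun z => ?_, fun z => ?_⟩
  · rw [show ev (H n) = fun z => Real.cos (n * z) from funext (ev_H n)]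
    exact (hn z).cos
  · exact ((hn z).sin.neg.mul_const (n : ℝ)).congr_deriv (by simp; ring)

/-- Solvability condition at the resonance: a right-hand side of `u'' = -u + f` with an even
periodic solution is orthogonal to `cos`. -/
lemma IsSol.orthogonal {U F : X} (h : IsSol (-1) U F) :
    ∫ t in (0 : ℝ)..Real.pi, Real.cos t * ev F t = 0 := by
  obtain ⟨u, hu, hu'⟩ := h
  rw [intervalIntegral.integral_eq_sub_of_hasDerivAt
    (f := fun z => u z * Real.cos z + ev U z * Real.sin z)
    (fun z _ => (((hu' z).mul (Real.hasDerivAt_cos z)).add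
      ((hu z).mul (Real.hasDerivAt_sin z))).congr_deriv (by ring))
    (Continuous.intervalIntegrable (by fun_prop) _ _)]
  simp [(neumann hu).1, (neumann hu).2]

lemma IsSol.eq_zero_of_pos {U : X} (h : IsSol 1 U 0) : U = 0 := by
  obtain ⟨u, hu, hu'⟩ := h
  have d0 : ∀ z, HasDerivAt (fun z => ev U z - ev U 0 * Real.cosh z)
      (u z - ev U 0 * Real.sinh z) z :=
    fun z => (hu z).sub ((Real.hasDerivAt_cosh z).const_mul _)
  have hw : ∀ z, ev U z - ev U 0 * Real.cosh z = 0 := ode_zero (l := 1) (m := 0) d0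
    (fun z => ((hu' z).sub ((Real.hasDerivAt_sinh z).const_mul _)).congr_deriv
      (by simp))
    (by simp) (by simp [(neumann hu).1])
  -- The Neumann condition at `π` now forces `U` to vanish at `0`.
  have h1 := d0 Real.pi
  simp_rw [hw] at h1
  have h2 := h1.unique (hasDerivAt_const _ _)
  rw [(neumann hu).2] at h2
  have h3 : Real.sinh Real.pi ≠ 0 := (Real.sinh_pos_iff.2 Real.pi_pos).ne'
  have h4 : ev U 0 = 0 := by
    rcases mul_eq_zero.1 (show ev U 0 * Real.sinh Real.pi = 0 by linarith) with h | h
    · exact h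
    · exact absurd h h3
  exact ev_ext fun z => by simpa [h4] using hw z

lemma IsSol.eq_smul_cosX {U : X} (h : IsSol (-1) U 0) : U = ev U 0 • cosX := by
  obtain ⟨u, hu, hu'⟩ := h
  have hw : ∀ z, ev U z - ev U 0 * Real.cos z = 0 := ode_zero (l := -1) (m := 0)
    (fun z => (hu z).sub ((Real.hasDerivAt_cos z).const_mul _))
    (fun z => ((hu' z).sub ((Real.hasDerivAt_sin z).neg.const_mul _)).congr_deriv
      (by simp; ring))
    (by simp) (by simp [(neumann hu).1])
  exact ev_ext fun z => by simpa [sub_eq_zero] using hw z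

/-- The linear theory. `P` is the first cosine coefficient, `K` inverts `u ↦ u'''' - u` on its
kernel, and `K₂` is the second derivative of `K`; both are diagonal on the harmonics. They arise
from `1 / (D⁴ - 1) = (1 / (D² - 1) - 1 / (D² + 1)) / 2`. -/
lemma exists_ops : ∃ (P : X →L[ℝ] ℝ) (K K₂ : X →L[ℝ] X),
    P cosX = 1 ∧ (∀ n, n ≠ 1 → P (H n) = 0) ∧ (∀ F, P (K F) = 0) ∧
    (∀ F, P F = 0 → ∃ u₁ u₃ : ℝ → ℝ, (∀ z, HasDerivAt (ev (K F)) (u₁ z) z) ∧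
      (∀ z, HasDerivAt u₁ (ev (K₂ F) z) z) ∧ (∀ z, HasDerivAt (ev (K₂ F)) (u₃ z) z) ∧
      (∀ z, HasDerivAt u₃ (ev (K F) z + ev F z) z)) ∧
    (∀ n : ℕ, n ≠ 1 → K (H n) = (1 / ((n : ℝ) ^ 4 - 1)) • H n ∧
      K₂ (H n) = (-(n : ℝ) ^ 2 / ((n : ℝ) ^ 4 - 1)) • H n) := by
  obtain ⟨I, hI⟩ := exists_integral_clm Real.cos Real.continuous_cos
  obtain ⟨Ic, hIc⟩ := exists_integral_clm Real.cosh Real.continuous_cosh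
  obtain ⟨Is, hIs⟩ := exists_integral_clm Real.sinh Real.continuous_sinh
  have hsh : Real.sinh Real.pi ≠ 0 := (Real.sinh_pos_iff.2 Real.pi_pos).ne'
  have hpi : Real.pi ≠ 0 := Real.pi_ne_zero
  obtain ⟨A, hA⟩ := exists_solOp (l := 1) (Ch := Real.cosh) (Sh := Real.sinh)
    (fun z => by simpa using Real.hasDerivAt_cosh z) Real.hasDerivAt_sinh
    (fun z => by linarith [Real.cosh_sq z]) Real.sinh_zero
    ((-(1 / Real.sinh Real.pi)) • (Real.cosh Real.pi • Ic - Real.sinh Real.pi • Is))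
  replace hA : ∀ F, IsSol 1 (A F) F := fun F => hA F (by
    simp only [← hIc, ← hIs, smul_apply, sub_apply,
      smul_eq_mul]
    field_simp
    ring)
  obtain ⟨B, hB⟩ := exists_solOp (l := -1) (Ch := Real.cos) (Sh := Real.sin)
    (fun z => by simpa using Real.hasDerivAt_cos z) Real.hasDerivAt_sin
    (fun z => by linarith [Real.cos_sq_add_sin_sq z]) Real.sin_zero 0
  let P : X →L[ℝ] ℝ := (2 / Real.pi) • I
  have hP : ∀ F, P F = 2 / Real.pi * ∫ t in (0 : ℝ)..Real.pi, Real.cos t * ev F t := fun F => by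
    simp [P, hI]
  have hPsol : ∀ {U F : X}, IsSol (-1) U F → P F = 0 := fun h => by simp [hP, h.orthogonal]
  have hPc : P cosX = 1 := by
    have := integral_cos_sq (a := 0) (b := Real.pi)
    simp only [Real.sin_pi, Real.sin_zero, mul_zero, sub_zero, zero_add] at this
    simp only [hP, ev_cosX, ← sq, this]
    field_simp
  have hPH : ∀ n, n ≠ 1 → P (H n) = 0 := fun n hn => by
    have := hPsol (isSol_H (-1) n)
    rw [map_smul, smul_eq_mul, mul_eq_zero] at this
    refine this.resolve_left fun h => hn ?_
    have : (n : ℝ) ^ 2 = 1 := by linarith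
    have h2 : n ^ 2 = 1 := by exact_mod_cast this
    simpa using h2
  have hcos : IsSol (-1) cosX 0 := by
    have h1 : H 1 = cosX := ev_ext fun z => by simp
    simpa [h1] using isSol_H (-1) 1
  let Q : X →L[ℝ] X := ContinuousLinearMap.id ℝ X - P.smulRight cosX
  have hQ : ∀ F, Q F = F - P F • cosX := fun F => by simp [Q]
  have hPQ : ∀ F, P (Q F) = 0 := fun F => by simp [hQ, hPc]
  have hQid : ∀ F, P F = 0 → Q F = F := fun F h => by simp [hQ, h]
  have hQB : ∀ F, P F = 0 → IsSol (-1) (Q (B F)) F := fun F h => by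
    have h0 := hB F (by
      have : P F = 0 := h
      rw [hP, mul_eq_zero] at this
      simp [this.resolve_left (by positivity)])
    have := h0.add_smul (r := -P (B F)) hcos
    simpa [hQ, sub_eq_add_neg] using this
  let K : X →L[ℝ] X := (1 / 2 : ℝ) • ((A - Q.comp B).comp Q)
  let K₂ : X →L[ℝ] X := (1 / 2 : ℝ) • ((A + Q.comp B).comp Q)
  have hK : ∀ F, K F = (1 / 2 : ℝ) • (A (Q F) - Q (B (Q F))) := fun F => by simp [K]
  have hK₂ : ∀ F, K₂ F = (1 / 2 : ℝ) • (A (Q F) + Q (B (Q F))) := fun F => by simp [K₂]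
  refine ⟨P, K, K₂, hPc, hPH, fun F => ?_, fun F hF => ?_, fun n hn => ?_⟩
  · -- `p = A f` also satisfies `p'' = -p + (2 p + f)`, so `2 p + f` is orthogonal to `cos`.
    have h1 : P (A (Q F)) = 0 := by
      obtain ⟨u, hu, hu'⟩ := hA (Q F)
      have : IsSol (-1) (A (Q F)) ((2 : ℝ) • A (Q F) + Q F) :=
        ⟨u, hu, fun z => (hu' z).congr_deriv (by simp; ring)⟩
      have := hPsol this
      simpa [hPQ] using this
    simp [hK, h1, hPQ]
  · obtain ⟨p, hp, hp'⟩ := hA F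
    obtain ⟨q, hq, hq'⟩ := hQB F hF
    have e1 : ev (K F) = fun z => 1 / 2 * (ev (A F) z - ev (Q (B F)) z) := by
      funext z; simp [hK, hQid F hF]
    have e2 : ev (K₂ F) = fun z => 1 / 2 * (ev (A F) z + ev (Q (B F)) z) := by
      funext z; simp [hK₂, hQid F hF]; ring
    rw [e1, e2]
    exact ⟨fun z => 1 / 2 * (p z - q z), fun z => 1 / 2 * (p z + q z),
      fun z => ((hp z).sub (hq z)).const_mul _,
      fun z => (((hp' z).sub (hq' z)).const_mul _).congr_deriv (by ring),
      fun z => ((hp z).add (hq z)).const_mul _,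
      fun z => (((hp' z).add (hq' z)).const_mul _).congr_deriv (by ring)⟩
  · have hH := hPH n hn
    have hne : (n : ℝ) ^ 2 - 1 ≠ 0 := fun h => hn (by
      have : (n : ℝ) ^ 2 = 1 := by linarith
      have h2 : n ^ 2 = 1 := by exact_mod_cast this
      simpa using h2)
    have hne2 : (n : ℝ) ^ 2 + 1 ≠ 0 := by positivity
    have hAH : A (H n) = (-1 / ((n : ℝ) ^ 2 + 1)) • H n := by
      have := (hA (H n)).add_smul (r := 1 / ((n : ℝ) ^ 2 + 1)) (isSol_H 1 n)
      rw [smul_smul, show 1 / ((n : ℝ) ^ 2 + 1) * (-(n : ℝ) ^ 2 - 1) = -1 by field_simp; ring,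
        neg_one_smul, add_neg_cancel] at this
      rw [neg_div, neg_smul, ← sub_eq_zero, sub_neg_eq_add, this.eq_zero_of_pos]
    have hBH : Q (B (H n)) = (-1 / ((n : ℝ) ^ 2 - 1)) • H n := by
      have := (hQB _ hH).add_smul (r := 1 / ((n : ℝ) ^ 2 - 1)) (isSol_H (-1) n)
      rw [smul_smul, show 1 / ((n : ℝ) ^ 2 - 1) * (-(n : ℝ) ^ 2 - -1) = -1 by field_simp; ring,
        neg_one_smul, add_neg_cancel] at this
      have h2 := this.eq_smul_cosX
      have h3 := congrArg P h2
      simp only [map_add, map_smul, hPQ, hH, hPc, smul_eq_mul, mul_one, mul_zero, add_zero] at h3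
      rw [← h3, zero_smul] at h2
      rw [neg_div, neg_smul, ← sub_eq_zero, sub_neg_eq_add, h2]
    have hne4 : (n : ℝ) ^ 4 - 1 ≠ 0 := by
      rw [show (n : ℝ) ^ 4 - 1 = ((n : ℝ) ^ 2 - 1) * ((n : ℝ) ^ 2 + 1) by ring]
      exact mul_ne_zero hne hne2
    rw [hK, hK₂, hQid _ hH, hAH, hBH, ← sub_smul, ← add_smul, smul_smul, smul_smul]
    constructor
    · congr 1; field_simp; ring
    · congr 1; field_simp; ring

/-! ### The branch of solutions and its expansion -/

section Branch

variable (P : X →L[ℝ] ℝ) (K K₂ : X →L[ℝ] X)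

/-- The rescaled profile `φ = cos + b K f`; the profile itself is `b φ`. -/
noncomputable def phi (b : ℝ) (F : X) : X := cosX + b • K F

/-- The second derivative of the rescaled profile, `φ'' = -cos + b K₂ f`. -/
noncomputable def phi2 (b : ℝ) (F : X) : X := -cosX + b • K₂ F

/-- The nonlinearity `15 φ φ'' + 15 b φ³`. -/
noncomputable def nl (b : ℝ) (F : X) : X :=
  (15 : ℝ) • (phi K b F * phi2 K₂ b F) + (15 * b) • phi K b F ^ 3

/-- The fixed-point map `f ↦ P(g) φ - g` with `g = 15 φ φ'' + 15 b φ³`; the coefficient `P(g)` is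
the speed correction that removes the resonant component. -/
noncomputable def fp (b : ℝ) (F : X) : X := P (nl K K₂ b F) • phi K b F - nl K K₂ b F

/-- Existence of the branch by the implicit function theorem: at `b = 0` the fixed-point map does
not depend on `f`. -/
lemma exists_branch : ∃ f : ℝ → X, ContinuousAt f 0 ∧ ∀ᶠ b in 𝓝 0, f b = fp P K K₂ b (f b) := by
  let G : ℝ × X → X := fun p => p.2 - fp P K K₂ p.1 p.2
  have hG : ContDiff ℝ 1 G := by
    unfold G fp nl phi phi2
    fun_prop
  let u : ℝ × X := (0, fp P K K₂ 0 0)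
  have h0 : ∀ F, fp P K K₂ 0 F = fp P K K₂ 0 0 := fun F => by simp [fp, nl, phi, phi2]
  have hs : HasStrictFDerivAt G (fderiv ℝ G u) u := hG.contDiffAt.hasStrictFDerivAt one_ne_zero
  -- Since `G (0, ·)` is the identity up to a constant, the partial derivative in `f` is the
  -- identity.
  have hid : fderiv ℝ G u ∘L .inr ℝ ℝ X = .id ℝ X := by
    have h1 : HasFDerivAt (fun F : X => G (0, F)) (fderiv ℝ G u ∘L .inr ℝ ℝ X) u.2 :=
      HasFDerivAt.comp (g := G) u.2 hs.hasFDerivAt (hasFDerivAt_prodMk_right (0 : ℝ) u.2)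
    have h2 : HasFDerivAt (fun F : X => G (0, F)) (.id ℝ X) u.2 := by
      simp only [G, h0]
      exact (hasFDerivAt_id _).sub_const _
    exact h1.unique h2
  have hinv : (fderiv ℝ G u ∘L .inr ℝ ℝ X).IsInvertible := by
    rw [hid]; exact ⟨.refl ℝ X, rfl⟩
  refine ⟨hs.implicitFunctionOfProdDomain hinv, ?_, ?_⟩
  · exact (hs.hasStrictFDerivAt_implicitFunctionOfProdDomain hinv).continuousAt
  · have := hs.eventually_apply_implicitFunctionOfProdDomain hinv
    filter_upwards [this] with b hb
    have hu : G u = 0 := by simp [G, u, h0]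
    rw [hu] at hb
    exact sub_eq_zero.1 hb

/-- The approximation of the branch, with error `O(b²)`. The coefficients make the terms of order
`b⁰` and `b¹` in the fixed-point equation cancel. -/
noncomputable def approx (b : ℝ) : X := (15 / 2 : ℝ) • H 0 + (15 / 2 : ℝ) • H 2 + (15 * b) • H 3

lemma cos_four_mul (z : ℝ) : Real.cos (4 * z) = 8 * Real.cos z ^ 4 - 8 * Real.cos z ^ 2 + 1 := by
  rw [show 4 * z = 2 * (2 * z) by ring, Real.cos_two_mul, Real.cos_two_mul]; ring

variable {P K K₂}

lemma K_approx (hH : ∀ n : ℕ, n ≠ 1 → K (H n) = (1 / ((n : ℝ) ^ 4 - 1)) • H n) (b : ℝ) :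
    K (approx b) = (-15 / 2 : ℝ) • H 0 + (1 / 2 : ℝ) • H 2 + (3 / 16 * b) • H 3 := by
  simp only [approx, map_add, map_smul, hH 0 (by norm_num), hH 2 (by norm_num),
    hH 3 (by norm_num), smul_smul]
  norm_num
  module

lemma K₂_approx (hH : ∀ n : ℕ, n ≠ 1 → K₂ (H n) = (-(n : ℝ) ^ 2 / ((n : ℝ) ^ 4 - 1)) • H n)
    (b : ℝ) : K₂ (approx b) = (-2 : ℝ) • H 2 + (-27 / 16 * b) • H 3 := by
  simp only [approx, map_add, map_smul, hH 0 (by norm_num), hH 2 (by norm_num),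
    hH 3 (by norm_num), smul_smul]
  norm_num
  module

/-- Expansion of the nonlinearity along the approximation. The coefficients of `b⁰` and `b²` have
only even harmonics, so the only resonant term below order `b³` is `105 b cos`. -/
lemma nl_approx (hK : ∀ b, K (approx b) =
      (-15 / 2 : ℝ) • H 0 + (1 / 2 : ℝ) • H 2 + (3 / 16 * b) • H 3)
    (hK₂ : ∀ b, K₂ (approx b) = (-2 : ℝ) • H 2 + (-27 / 16 * b) • H 3) :
    ∃ r : ℝ → X, Continuous r ∧ ∀ b, nl K K₂ b (approx b) =
      (-15 / 2 : ℝ) • H 0 + (-15 / 2 : ℝ) • H 2 + b • ((105 : ℝ) • cosX + (-15 : ℝ) • H 3)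
      + b ^ 2 • ((-1365 / 8 : ℝ) • H 0 + (855 / 16 : ℝ) • H 2 + (-255 / 16 : ℝ) • H 4)
      + b ^ 3 • r b := by
  -- With `φ = c + b α + b² β` and `φ'' = -c + b γ + b² δ`, the remainder collects the terms of
  -- degree at least three in `b`.
  let α : X := (-15 / 2 : ℝ) • H 0 + (1 / 2 : ℝ) • H 2
  let β : X := (3 / 16 : ℝ) • H 3
  let γ : X := (-2 : ℝ) • H 2
  let δ : X := (-27 / 16 : ℝ) • H 3
  let c : X := cosX
  refine ⟨fun b => (15 : ℝ) • (α * δ + β * γ + b • (β * δ))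
    + (15 : ℝ) • ((3 : ℝ) • (c ^ 2 * β + c * α ^ 2) + b • ((6 : ℝ) • (c * α * β) + α ^ 3)
      + (3 * b ^ 2) • (c * β ^ 2 + α ^ 2 * β) + (3 * b ^ 3) • (α * β ^ 2) + b ^ 4 • β ^ 3),
    by fun_prop, fun b => ev_ext fun z => ?_⟩
  simp only [nl, phi, phi2, hK, hK₂, α, β, γ, δ, c, ev_add, ev_neg, ev_mul, ev_smul, ev_pow, ev_H,
    ev_cosX, Nat.cast_ofNat, Nat.cast_zero, zero_mul, Real.cos_zero, Real.cos_two_mul,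
    Real.cos_three_mul, cos_four_mul]
  ring

/-- The nonlinearity is Lipschitz in `f` with a constant of order `b`: its increment is `b` times
an expression linear in `F - G`. -/
lemma nl_sub (b : ℝ) (F G : X) : nl K K₂ b F - nl K K₂ b G =
    b • ((15 : ℝ) • (K (F - G) * phi2 K₂ b F + phi K b G * K₂ (F - G))
      + (15 * b) • (K (F - G) *
        (phi K b F ^ 2 + phi K b F * phi K b G + phi K b G ^ 2))) := by
  refine ev_ext fun z => ?_
  simp only [nl, phi, phi2, map_sub, ev_add, ev_sub, ev_neg, ev_mul, ev_smul, ev_pow, ev_cosX]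
  ring

/-- The branch agrees with `approx` up to `O(b²)`, and the speed correction with `105 b` up to
`O(b³)`. The difference `d` satisfies `d = b W + O(b²)` with `W = O(d)`, which gives the first
bound; the second one follows because the nonlinearity changes by `O(b d)`. -/
lemma branch_estimate (hPc : P cosX = 1) (hPH : ∀ n, n ≠ 1 → P (H n) = 0)
    (hK : ∀ b, K (approx b) = (-15 / 2 : ℝ) • H 0 + (1 / 2 : ℝ) • H 2 + (3 / 16 * b) • H 3)
    (hK₂ : ∀ b, K₂ (approx b) = (-2 : ℝ) • H 2 + (-27 / 16 * b) • H 3)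
    {f : ℝ → X} (hf : ContinuousAt f 0) (hfp : ∀ᶠ b in 𝓝 0, f b = fp P K K₂ b (f b)) :
    (fun b => f b - approx b) =O[𝓝 0] (fun b : ℝ => b ^ 2) ∧
    (fun b => P (nl K K₂ b (f b)) - 105 * b) =O[𝓝 0] (fun b : ℝ => b ^ 3) := by
  obtain ⟨r, hr, hg⟩ := nl_approx hK hK₂
  have ca : Continuous approx := by unfold approx; fun_prop
  set d : ℝ → X := fun b => f b - approx b with hd
  let E : ℝ → X := fun b =>
    (15 : ℝ) • (K (d b) * phi2 K₂ b (f b) + phi K b (approx b) * K₂ (d b))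
      + (15 * b) • (K (d b) * (phi K b (f b) ^ 2 + phi K b (f b) * phi K b (approx b)
        + phi K b (approx b) ^ 2))
  have hE : ∀ b, nl K K₂ b (f b) - nl K K₂ b (approx b) = b • E b := fun b => nl_sub b _ _
  have hφ : ∀ b, phi K b (f b) - phi K b (approx b) = b • K (d b) := fun b => by
    simp [phi, d, smul_sub]
  have hPg : ∀ b, P (nl K K₂ b (approx b)) = 105 * b + b ^ 3 * P (r b) := fun b => by
    simp [hg, hPc, hPH]; ring
  -- Boundedness near `b = 0` of everything but `d`.
  have c1 : ContinuousAt (fun b => phi K b (f b)) 0 := by unfold phi; fun_prop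
  have c2 : ContinuousAt (fun b => phi2 K₂ b (f b)) 0 := by unfold phi2; fun_prop
  have c3 : Continuous (fun b => phi K b (approx b)) := by unfold phi; fun_prop
  have c4 : Continuous (fun b => nl K K₂ b (approx b)) := by unfold nl phi phi2; fun_prop
  have one : ∀ {V : Type} [NormedAddCommGroup V] {h : ℝ → V}, ContinuousAt h 0 →
      h =O[𝓝 0] (fun _ => (1 : ℝ)) := fun h => h.isBigO_one ℝ
  have hKd : (fun b => K (d b)) =O[𝓝 0] d := K.isBigO_comp _ _
  have hK₂d : (fun b => K₂ (d b)) =O[𝓝 0] d := K₂.isBigO_comp _ _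
  have hEd : E =O[𝓝 0] d := by
    have e1 : (fun b => K (d b) * phi2 K₂ b (f b)) =O[𝓝 0] fun b => ‖d b‖ := by
      simpa using hKd.norm_right.mul (one c2)
    have e2 : (fun b => phi K b (approx b) * K₂ (d b)) =O[𝓝 0] fun b => ‖d b‖ := by
      simpa using (one c3.continuousAt).mul hK₂d.norm_right
    have e3 : (fun b => K (d b) * (phi K b (f b) ^ 2 + phi K b (f b) * phi K b (approx b)
        + phi K b (approx b) ^ 2)) =O[𝓝 0] fun b => ‖d b‖ := by
      simpa using hKd.norm_right.mul (one (h := fun b => phi K b (f b) ^ 2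
        + phi K b (f b) * phi K b (approx b) + phi K b (approx b) ^ 2)
        (((c1.pow 2).add (c1.mul c3.continuousAt)).add (c3.continuousAt.pow 2)))
    have e4 : (fun b : ℝ => 15 * b) =O[𝓝 0] fun _ => (1 : ℝ) := one (by fun_prop)
    have e5 : (fun b => (15 : ℝ) • (K (d b) * phi2 K₂ b (f b) + phi K b (approx b) * K₂ (d b)))
        =O[𝓝 0] fun b => ‖d b‖ := (e1.add e2).const_smul_left (15 : ℝ)
    exact IsBigO.of_norm_right (e5.add (by simpa using e4.smul e3))
  let W : ℝ → X := fun b => P (E b) • phi K b (f b) + P (nl K K₂ b (approx b)) • K (d b) - E b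
  have hW : W =O[𝓝 0] d := by
    have hPE : (fun b => P (E b)) =O[𝓝 0] d := (P.isBigO_comp _ _).trans hEd
    have e1 : (fun b => P (E b) • phi K b (f b)) =O[𝓝 0] fun b => ‖d b‖ := by
      simpa using hPE.norm_right.smul (one c1)
    have e2 : (fun b => P (nl K K₂ b (approx b)) • K (d b)) =O[𝓝 0] fun b => ‖d b‖ := by
      simpa using (one (P.continuous.comp c4).continuousAt).smul
        hKd.norm_right
    exact IsBigO.of_norm_right ((e1.add e2).sub hEd.norm_right)
  let ρ : ℝ → X := fun b => (105 : ℝ) • K (approx b) + (b * P (r b)) • phi K b (approx b)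
    - ((-1365 / 8 : ℝ) • H 0 + (855 / 16 : ℝ) • H 2 + (-255 / 16 : ℝ) • H 4) - b • r b
  have hres : ∀ b, fp P K K₂ b (approx b) - approx b = b ^ 2 • ρ b := fun b => by
    refine ev_ext fun z => ?_
    simp only [fp, hPg, ρ]
    rw [hg]
    simp only [phi, approx, ev_add, ev_sub, ev_smul]
    ring
  have hdiff : ∀ b, fp P K K₂ b (f b) - fp P K K₂ b (approx b) = b • W b := fun b => by
    have hf1 := sub_eq_iff_eq_add.1 (hE b)
    have hf2 := sub_eq_iff_eq_add.1 (hφ b)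
    have hf3 : P (nl K K₂ b (f b)) = b * P (E b) + P (nl K K₂ b (approx b)) := by
      rw [hf1]; simp
    simp only [fp, W]
    rw [hf3, hf1, hf2]
    module
  have hd2 : d =O[𝓝 0] (fun b : ℝ => b ^ 2) := by
    have hlit : (fun b => b • W b) =o[𝓝 0] d := by
      have : (fun b : ℝ => b) =o[𝓝 0] (fun _ => (1 : ℝ)) :=
        (isLittleO_one_iff ℝ).2 continuousAt_id
      exact IsLittleO.of_norm_right (by simpa using this.smul_isBigO hW.norm_right)
    refine hlit.right_isBigO_sub.trans ?_
    have heq : (fun b => d b - b • W b) =ᶠ[𝓝 0] fun b => b ^ 2 • ρ b := by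
      filter_upwards [hfp] with b hb
      rw [← hdiff, ← hres, ← hb]
      simp [d]
    refine heq.trans_isBigO ?_
    have hρ : ContinuousAt ρ 0 := by unfold ρ; fun_prop
    simpa using (isBigO_refl (fun b : ℝ => b ^ 2) (𝓝 0)).smul (one hρ)
  refine ⟨hd2, ?_⟩
  have heq : (fun b => P (nl K K₂ b (f b)) - 105 * b) =
      fun b => b * P (E b) + b ^ 3 * P (r b) := by
    funext b
    rw [sub_eq_iff_eq_add.1 (hE b), map_add, hPg]
    simp
    ring
  rw [heq]
  refine IsBigO.add ?_ ?_
  · have := (isBigO_refl (fun b : ℝ => b) (𝓝 0)).mul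
      (((P.isBigO_comp E _).trans hEd).trans hd2)
    refine this.congr_right fun b => by ring
  · simpa using (isBigO_refl (fun b : ℝ => b ^ 3) (𝓝 0)).mul
      (one (h := fun b => P (r b)) (by fun_prop))

end Branch

/-! ### Smoothness and the case `k = 1` -/

/-- Smoothness by bootstrapping: a function whose fourth derivative is a polynomial in it and its
second derivative is smooth. -/
lemma contDiff_of_chain {v v₁ v₂ v₃ : ℝ → ℝ} {p q : ℝ} (h0 : ∀ z, HasDerivAt v (v₁ z) z)
    (h1 : ∀ z, HasDerivAt v₁ (v₂ z) z) (h2 : ∀ z, HasDerivAt v₂ (v₃ z) z)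
    (h3 : ∀ z, HasDerivAt v₃ (p * v z - q * v z * v₂ z - q * v z ^ 3) z) :
    ContDiff ℝ (⊤ : ℕ∞) v := by
  have step : ∀ (n : ℕ) {g g' : ℝ → ℝ}, (∀ z, HasDerivAt g (g' z) z) → ContDiff ℝ n g' →
      ContDiff ℝ (n + 1 : ℕ) g := fun n g g' h hc => by
    rw [Nat.cast_add, Nat.cast_one, contDiff_succ_iff_deriv]
    exact ⟨fun z => (h z).differentiableAt, by simp,
      by rwa [show deriv g = g' from funext fun z => (h z).deriv]⟩
  have key : ∀ n : ℕ, ContDiff ℝ n v ∧ ContDiff ℝ n v₁ ∧ ContDiff ℝ n v₂ ∧ ContDiff ℝ n v₃ := by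
    intro n
    induction n with
    | zero =>
      simp only [Nat.cast_zero, contDiff_zero]
      exact ⟨continuous_iff_continuousAt.2 fun z => (h0 z).continuousAt,
        continuous_iff_continuousAt.2 fun z => (h1 z).continuousAt,
        continuous_iff_continuousAt.2 fun z => (h2 z).continuousAt,
        continuous_iff_continuousAt.2 fun z => (h3 z).continuousAt⟩
    | succ n ih =>
      obtain ⟨i0, i1, i2, i3⟩ := ih
      exact ⟨step n h0 i1, step n h1 i2, step n h2 i3, step n h3 (by fun_prop)⟩
  exact contDiff_infty.2 fun n => (key n).1

/-- The branch for `k = 1`, parametrized by the rescaled amplitude `b`. -/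
lemma exists_unit : ∃ ε > (0 : ℝ), ∃ C > (0 : ℝ), ∀ b : ℝ, |b| < ε →
    ∃ (s : ℝ) (v v₁ v₂ v₃ : ℝ → ℝ), (∀ z, v (-z) = v z) ∧ Function.Periodic v (2 * Real.pi) ∧
      (∀ z, HasDerivAt v (v₁ z) z) ∧ (∀ z, HasDerivAt v₁ (v₂ z) z) ∧
      (∀ z, HasDerivAt v₂ (v₃ z) z) ∧
      (∀ z, HasDerivAt v₃ (s * v z - 15 * v z * v₂ z - 15 * v z ^ 3) z) ∧
      (∀ z, |v z - (b * Real.cos z + b ^ 2 * (-(15 / 2) + Real.cos (2 * z) / 2)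
        + b ^ 3 * (3 / 16) * Real.cos (3 * z))| ≤ C * b ^ 4) ∧
      |s - (1 + 105 * b ^ 2)| ≤ C * b ^ 4 := by
  obtain ⟨P, K, K₂, hPc, hPH, hPK, hsol, hH⟩ := exists_ops
  obtain ⟨f, hf, hfp⟩ := exists_branch P K K₂
  have hKa := K_approx fun n hn => (hH n hn).1
  have hK₂a := K₂_approx fun n hn => (hH n hn).2
  obtain ⟨hd, hs⟩ := branch_estimate hPc hPH hKa hK₂a hf hfp
  have hKd := (K.isBigO_comp (fun b => f b - approx b) (𝓝 0)).trans hd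
  obtain ⟨C₁, hC₁, hb₁⟩ := hKd.exists_pos
  obtain ⟨C₂, hC₂, hb₂⟩ := hs.exists_pos
  obtain ⟨ε, hε, hball⟩ := Metric.eventually_nhds_iff.1
    (hfp.and ((isBigOWith_iff.1 hb₁).and (isBigOWith_iff.1 hb₂)))
  refine ⟨ε, hε, C₁ + C₂, by positivity, fun b hb => ?_⟩
  obtain ⟨e0, e1, e2⟩ := hball (y := b) (by simpa using hb)
  set φ : X := phi K b (f b) with hφ
  set σ : ℝ := P (nl K K₂ b (f b)) with hσ
  have hPφ : P φ = 1 := by simp [hφ, phi, hPc, hPK]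
  have hPf : P (f b) = 0 := by
    rw [e0]
    simp only [fp, map_sub, map_smul, ← hφ, ← hσ, hPφ, smul_eq_mul, mul_one, sub_self]
  obtain ⟨u₁, u₃, d0, d1, d2, d3⟩ := hsol _ hPf
  have evφ : ∀ z, ev φ z = Real.cos z + b * ev (K (f b)) z := fun z => by simp [hφ, phi]
  have hev : (fun z => b * (Real.cos z + b * ev (K (f b)) z)) = fun z => b * ev φ z :=
    funext fun z => by rw [evφ]
  refine ⟨1 + b * σ, fun z => b * (Real.cos z + b * ev (K (f b)) z),
    fun z => b * (-Real.sin z + b * u₁ z), fun z => b * (-Real.cos z + b * ev (K₂ (f b)) z),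
    fun z => b * (Real.sin z + b * u₃ z), ?_, ?_, ?_, ?_, ?_, ?_, ?_, ?_⟩
  · intro z
    simp [ev_even]
  · rw [hev]
    intro z
    simp only [ev_periodic φ z]
  · exact fun z => ((Real.hasDerivAt_cos z).add ((d0 z).const_mul b)).const_mul b
  · exact fun z => ((Real.hasDerivAt_sin z).neg.add ((d1 z).const_mul b)).const_mul b
  · exact fun z => (((Real.hasDerivAt_cos z).neg.add ((d2 z).const_mul b)).const_mul b).congr_deriv
      (by simp)
  · refine fun z => (((Real.hasDerivAt_sin z).add ((d3 z).const_mul b)).const_mul b).congr_deriv ?_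
    have := congrArg (fun F => ev F z) e0
    simp only [fp, ← hφ, ← hσ, ev_sub, ev_smul] at this
    rw [this]
    simp only [nl, ← hφ, phi2, ev_add, ev_smul, ev_mul, ev_pow, ev_neg, ev_cosX, evφ]
    ring
  · intro z
    have h1 : |ev (K (f b - approx b)) z| ≤ C₁ * b ^ 2 :=
      (abs_ev_le _ z).trans (by simpa using e1)
    have h2 : b * (Real.cos z + b * ev (K (f b)) z)
        - (b * Real.cos z + b ^ 2 * (-(15 / 2) + Real.cos (2 * z) / 2)
        + b ^ 3 * (3 / 16) * Real.cos (3 * z)) = b ^ 2 * ev (K (f b - approx b)) z := by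
      rw [map_sub, hKa]
      simp only [ev_add, ev_sub, ev_smul, ev_H, Nat.cast_ofNat, Nat.cast_zero, zero_mul,
        Real.cos_zero]
      ring
    rw [h2, abs_mul, abs_of_nonneg (sq_nonneg b)]
    have h3 := mul_le_mul_of_nonneg_left h1 (sq_nonneg b)
    have h4 : 0 ≤ C₂ * b ^ 4 := by positivity
    linarith
  · rw [show 1 + b * σ - (1 + 105 * b ^ 2) = b * (σ - 105 * b) by ring, abs_mul]
    have h1 : |σ - 105 * b| ≤ C₂ * |b| ^ 3 := by simpa using e2
    have h3 := mul_le_mul_of_nonneg_left h1 (abs_nonneg b)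
    have h4 : 0 ≤ C₁ * b ^ 4 := by positivity
    have h5 : |b| * (C₂ * |b| ^ 3) = C₂ * b ^ 4 := by
      rw [← Even.pow_abs (by decide : Even 4) b]; ring
    linarith

end CDGSK

/-- **Existence of small-amplitude periodic traveling waves of the CDG–SK equation.**
Fix a wavenumber `k > 0`. There exist `ε₀ > 0` and `C > 0` such that for every real `a`
with `|a| < ε₀` there are a wave speed `c` and a smooth, even, `2π`-periodic profile
`w : ℝ → ℝ` solving the CDG–SK profile equation
`k⁴ w⁗ − c w + 15 k² w w'' + 15 w³ = 0`, with
`w = a cos z + a²(−15/(2k²) + cos 2z/(2k²)) + a³ (3/(16k⁴)) cos 3z + O(a⁴)` uniformly in `z`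
and `c = k⁴ + 105 a² + O(a⁴)`. -/
theorem cdgsk_existence_small_periodic_waves (k : ℝ) (hk : 0 < k) :
    ∃ ε₀ > (0 : ℝ), ∃ C > (0 : ℝ), ∀ a : ℝ, |a| < ε₀ →
      ∃ (c : ℝ) (w : ℝ → ℝ),
        ContDiff ℝ (⊤ : ℕ∞) w ∧
        (∀ z : ℝ, w (-z) = w z) ∧
        Function.Periodic w (2 * Real.pi) ∧
        (∀ z : ℝ, k ^ 4 * iteratedDeriv 4 w z - c * w z
            + 15 * k ^ 2 * w z * iteratedDeriv 2 w z + 15 * (w z) ^ 3 = 0) ∧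
        (∀ z : ℝ, |w z - (a * Real.cos z
            + a ^ 2 * (-(15 / (2 * k ^ 2)) + Real.cos (2 * z) / (2 * k ^ 2))
            + a ^ 3 * (3 / (16 * k ^ 4)) * Real.cos (3 * z))| ≤ C * a ^ 4) ∧
        |c - (k ^ 4 + 105 * a ^ 2)| ≤ C * a ^ 4 := by
  obtain ⟨ε, hε, C, hC, H⟩ := CDGSK.exists_unit
  have hk' : k ≠ 0 := ne_of_gt hk
  -- The scaling `w = k² v`, `c = k⁴ s`, `a = k² b` reduces to `k = 1`.
  refine ⟨k ^ 2 * ε, by positivity, C * (1 / k ^ 6 + 1 / k ^ 4), by positivity, fun a ha => ?_⟩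
  obtain ⟨b, rfl⟩ : ∃ b, a = k ^ 2 * b := ⟨a / k ^ 2, by field_simp⟩
  obtain ⟨s, v, v₁, v₂, v₃, hev, hper, h0, h1, h2, h3, hv, hs⟩ := H b (by
    rw [abs_mul, abs_of_pos (by positivity : 0 < k ^ 2)] at ha
    exact lt_of_mul_lt_mul_left ha (by positivity))
  have i1 : deriv (fun z => k ^ 2 * v z) = fun z => k ^ 2 * v₁ z :=
    funext fun z => ((h0 z).const_mul _).deriv
  have i2 : deriv (fun z => k ^ 2 * v₁ z) = fun z => k ^ 2 * v₂ z :=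
    funext fun z => ((h1 z).const_mul _).deriv
  have i3 : deriv (fun z => k ^ 2 * v₂ z) = fun z => k ^ 2 * v₃ z :=
    funext fun z => ((h2 z).const_mul _).deriv
  have i4 : deriv (fun z => k ^ 2 * v₃ z) =
      fun z => k ^ 2 * (s * v z - 15 * v z * v₂ z - 15 * v z ^ 3) :=
    funext fun z => ((h3 z).const_mul _).deriv
  refine ⟨k ^ 4 * s, fun z => k ^ 2 * v z,
    contDiff_const.mul (CDGSK.contDiff_of_chain h0 h1 h2 h3), fun z => by simp only [hev],
    fun z => by simp only [hper z], fun z => ?_, fun z => ?_, ?_⟩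
  · simp only [iteratedDeriv_succ', i1, i2, i3, i4, iteratedDeriv_zero]
    ring
  · have e : k ^ 2 * v z - (k ^ 2 * b * Real.cos z
        + (k ^ 2 * b) ^ 2 * (-(15 / (2 * k ^ 2)) + Real.cos (2 * z) / (2 * k ^ 2))
        + (k ^ 2 * b) ^ 3 * (3 / (16 * k ^ 4)) * Real.cos (3 * z)) =
        k ^ 2 * (v z - (b * Real.cos z + b ^ 2 * (-(15 / 2) + Real.cos (2 * z) / 2)
        + b ^ 3 * (3 / 16) * Real.cos (3 * z))) := by
      field_simp
    rw [e, abs_mul, abs_of_pos (by positivity : 0 < k ^ 2)]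
    have e1 := mul_le_mul_of_nonneg_left (hv z) (by positivity : 0 ≤ k ^ 2)
    have e2 : C * (1 / k ^ 6 + 1 / k ^ 4) * (k ^ 2 * b) ^ 4 =
        k ^ 2 * (C * b ^ 4) + C * k ^ 4 * b ^ 4 := by
      field_simp
    have e3 : 0 ≤ C * k ^ 4 * b ^ 4 := by positivity
    linarith
  · rw [show k ^ 4 * s - (k ^ 4 + 105 * (k ^ 2 * b) ^ 2) = k ^ 4 * (s - (1 + 105 * b ^ 2)) by ring,
      abs_mul, abs_of_pos (by positivity : 0 < k ^ 4)]
    have e1 := mul_le_mul_of_nonneg_left hs (by positivity : 0 ≤ k ^ 4)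
    have e2 : C * (1 / k ^ 6 + 1 / k ^ 4) * (k ^ 2 * b) ^ 4 =
        C * k ^ 2 * b ^ 4 + k ^ 4 * (C * b ^ 4) := by
      field_simp
    have e3 : 0 ≤ C * k ^ 2 * b ^ 4 := by positivity
    linarith
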